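/- Let 𝐅 = (F_1,…,F_d) be a d-tuple of continuous cdfs on ℝ with F_{i-1} ≥ F_i pointwise for all 2 ≤ i ≤ d. Then C^sym(𝐅) = C_{δ^𝐅} ∩ C^sym: the image of C^OS(𝐅) under S_𝐅 equals the set of symmetric copulas whose multidiagonal is δ^𝐅 = (F_i ∘ G^{-1}, 1 ≤ i ≤ d), where G = (1/d) Σ_{i=1}^d F_i. -/

import Mathlib

/- Formalization framework for "Maximum entropy distribution of order statistics with given
marginals" (Butucea, Delmas, Dutfoy, Fischer).  One-dimensional cdfs are identified with
(probability) measures on `ℝ`, and cdfs on `ℝ^d` with measures on `Fin d → ℝ`. -/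

open MeasureTheory Set
open scoped ENNReal

noncomputable section

namespace MaxEntOS

variable {d : ℕ}

/-- The cumulative distribution function of a measure on `ℝ`. -/
def cdf1 (ν : Measure ℝ) (t : ℝ) : ℝ := (ν (Iic t)).toReal

/-- The cdf extended to `EReal` arguments (so that `cdfE ν ⊥ = 0` and `cdfE ν ⊤ = ν ℝ`). -/
def cdfE (ν : Measure ℝ) (x : EReal) : ℝ := (ν {s : ℝ | (s : EReal) ≤ x}).toReal

/-- The generalized inverse (quantile function) of the cdf of `ν`, real-valued. -/
def qReal (ν : Measure ℝ) (t : ℝ) : ℝ := sInf {s : ℝ | t ≤ cdf1 ν s}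

/-- The generalized inverse of a nondecreasing function `g : ℝ → ℝ`, `EReal`-valued, with the
conventions `inf ∅ = ⊤` and `inf ℝ = ⊥`. -/
def qInvE (g : ℝ → ℝ) (t : ℝ) : EReal := sInf ((fun s : ℝ => (s : EReal)) '' {s : ℝ | t ≤ g s})

open scoped Classical in
/-- The differential entropy (with respect to Lebesgue measure) of a measure, with values in
`EReal` : it equals `⊥` if the measure is not absolutely continuous, and otherwise it is
`−∫ f log f`, computed as the difference of the lower integrals of the negative and positive
parts of `f log f`, where `f` is the density. -/
def dEntropy {α : Type*} [MeasureSpace α] (μ : Measure α) : EReal :=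
  if μ ≪ (volume : Measure α) then
    ((∫⁻ x, ENNReal.ofReal
        (-((μ.rnDeriv volume x).toReal * Real.log ((μ.rnDeriv volume x).toReal))) : ℝ≥0∞) : EReal)
      - ((∫⁻ x, ENNReal.ofReal
        ((μ.rnDeriv volume x).toReal * Real.log ((μ.rnDeriv volume x).toReal)) : ℝ≥0∞) : EReal)
  else ⊥

/-- The nondecreasing rearrangement (order statistics) of a tuple. -/
def orderStat (x : Fin d → ℝ) : Fin d → ℝ := fun i => x (Tuple.sort x i)

/-- The `i`-th one-dimensional marginal of a measure on `ℝ^d`. -/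
def marg (μ : Measure (Fin d → ℝ)) (i : Fin d) : Measure ℝ := μ.map fun x => x i

/-- The multidiagonal of a measure on `ℝ^d` : the tuple of one-dimensional marginals of the
order statistics. -/
def multidiag (μ : Measure (Fin d → ℝ)) (i : Fin d) : Measure ℝ := μ.map fun x => orderStat x i

/-- The uniform distribution on `[0,1]`. -/
def uniform01 : Measure ℝ := (volume : Measure ℝ).restrict (Icc 0 1)

/-- A copula : a probability measure on `ℝ^d` whose one-dimensional marginals are all uniform
on `[0,1]`. -/
def IsCopula (μ : Measure (Fin d → ℝ)) : Prop :=
  IsProbabilityMeasure μ ∧ ∀ i, marg μ i = uniform01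

/-- A measure on `ℝ^d` is symmetric (exchangeable) if it is invariant under permutations of the
coordinates. -/
def IsSymmetric (μ : Measure (Fin d → ℝ)) : Prop :=
  ∀ π : Equiv.Perm (Fin d), μ.map (fun x => fun i => x (π i)) = μ

/-- `δ` belongs to `D` : it is the multidiagonal of some copula. -/
def IsMultidiag (δ : Fin d → Measure ℝ) : Prop :=
  ∃ μ : Measure (Fin d → ℝ), IsCopula μ ∧ multidiag μ = δ

/-- `δ` belongs to `D^0` : it is the multidiagonal of some absolutely continuous copula. -/
def IsMultidiag0 (δ : Fin d → Measure ℝ) : Prop :=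
  ∃ μ : Measure (Fin d → ℝ), IsCopula μ ∧ μ ≪ (volume : Measure (Fin d → ℝ)) ∧ multidiag μ = δ

/-- `F ∈ F_d` : `F` is a `d`-tuple of continuous one-dimensional cdfs (identified with atomless
probability measures on `ℝ`) which are stochastically ordered : `F (i-1) ≥ F i` pointwise. -/
structure IsMargOS [NeZero d] (F : Fin d → Measure ℝ) : Prop where
  prob : ∀ i, IsProbabilityMeasure (F i)
  cont : ∀ i, ∀ t : ℝ, F i {t} = 0
  ord : ∀ i : Fin d, i ≠ 0 → ∀ t : ℝ, cdf1 (F i) t ≤ cdf1 (F (i - 1)) t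

/-- `μ ∈ L^OS_d(F)` : `μ` is the distribution of a `d`-dimensional order statistic (an almost
surely nondecreasing random vector) with one-dimensional marginals `F`. -/
def IsCdfOS (F : Fin d → Measure ℝ) (μ : Measure (Fin d → ℝ)) : Prop :=
  IsProbabilityMeasure μ ∧ μ {x | Monotone x} = 1 ∧ ∀ i, marg μ i = F i

/-- `F ∈ F_d^0` : there exists an absolutely continuous distribution of order statistics with
one-dimensional marginals `F`. -/
def IsMargOS0 [NeZero d] (F : Fin d → Measure ℝ) : Prop :=
  IsMargOS F ∧ ∃ μ : Measure (Fin d → ℝ), IsCdfOS F μ ∧ μ ≪ (volume : Measure (Fin d → ℝ))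

/-- The functional `J(F) = ∑_{i=2}^d ∫ |log (F_{i-1}(t) − F_i(t))| dF_i(t) ∈ [0,∞]`. -/
def Jfun [NeZero d] (F : Fin d → Measure ℝ) : ℝ≥0∞ :=
  ∑ i : Fin d, if i = 0 then 0 else
    ∫⁻ t, ENNReal.ofReal |Real.log (cdf1 (F (i - 1)) t - cdf1 (F i) t)| ∂(F i)

/-- The copula of a measure on `ℝ^d` (for continuous marginals this is the unique copula
provided by Sklar's theorem) : the law of `(F_1(X_1), …, F_d(X_d))`. -/
def copulaOf (μ : Measure (Fin d → ℝ)) : Measure (Fin d → ℝ) :=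
  μ.map fun x => fun i => cdf1 (marg μ i) (x i)

/-- The set `C^{OS}(F)` of copulas of distributions of order statistics with marginal
cdfs `F`. -/
def copulaOS (F : Fin d → Measure ℝ) : Set (Measure (Fin d → ℝ)) :=
  {C | ∃ μ, IsCdfOS F μ ∧ copulaOf μ = C}

/-- The joint distribution with one-dimensional marginals `F` and copula `C` : the law of
`(F_1^{-1}(U_1), …, F_d^{-1}(U_d))` where `U ∼ C`. -/
def joinCopula (F : Fin d → Measure ℝ) (C : Measure (Fin d → ℝ)) : Measure (Fin d → ℝ) :=
  C.map fun u => fun i => qReal (F i) (u i)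

/-- The law of `X_Π`, where `X ∼ μ` and `Π` is an independent uniform random permutation of
`{1, …, d}`. -/
def symmetrize (μ : Measure (Fin d → ℝ)) : Measure (Fin d → ℝ) :=
  (d.factorial : ℝ≥0∞)⁻¹ • ∑ π : Equiv.Perm (Fin d), μ.map (fun x => fun i => x (π i))

/-- The symmetrizing operator `S_F` on copulas : `S_F(C)` is the copula of `X_Π` where `X` has
one-dimensional marginals `F` and copula `C`, and `Π` is an independent uniform random
permutation. -/
def SF (F : Fin d → Measure ℝ) (C : Measure (Fin d → ℝ)) : Measure (Fin d → ℝ) :=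
  copulaOf (symmetrize (joinCopula F C))

/-- The average cdf `G = (1/d) ∑_{i=1}^d F_i`. -/
def Gbar (F : Fin d → Measure ℝ) (t : ℝ) : ℝ := (∑ i, cdf1 (F i) t) / d

/-- `G` extended to `EReal` arguments (`GbarE F ⊥ = 0` and `GbarE F ⊤ = 1` for probability
measures). -/
def GbarE (F : Fin d → Measure ℝ) (x : EReal) : ℝ := (∑ i, cdfE (F i) x) / d

/-- The multidiagonal `δ^F` associated to the marginals `F`, as a tuple of measures : the law
of `G(X_i)` where `X_i ∼ F_i`, whose cdf is `F_i ∘ G^{-1}`. -/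
def mdiagF (F : Fin d → Measure ℝ) (i : Fin d) : Measure ℝ := (F i).map (Gbar F)

/-- `C` is a copula of the measure `ν` on `ℝ^d` : `C` is a copula and `ν` is the joint
distribution with the marginals of `ν` and copula `C`. -/
def IsCopulaOf (C ν : Measure (Fin d → ℝ)) : Prop :=
  IsCopula C ∧ ν = joinCopula (marg ν) C

/-- The extended tuple of multidiagonal cdfs, with the conventions `δ_(0) = 1` and
`δ_(d+1) = 0`; the natural index `i ∈ {1, …, d}` corresponds to `δ_(i)`. -/
def dcdf (δ : Fin d → Measure ℝ) (i : ℕ) (t : ℝ) : ℝ :=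
  if h0 : i = 0 then 1
  else if h : i ≤ d then cdf1 (δ ⟨i - 1, by omega⟩) t
  else 0

/-- The open set `Ψ^δ_i = {t ∈ (0,1) : δ_(i-1)(t) > δ_(i)(t)}`, for `1 ≤ i ≤ d+1`
(with the conventions `δ_(0) = 1` and `δ_(d+1) = 0`). -/
def Psi (δ : Fin d → Measure ℝ) (i : ℕ) : Set ℝ :=
  Ioo 0 1 ∩ {t | dcdf δ i t < dcdf δ (i - 1) t}

/-- Left endpoint of the connected component of `U` containing `t`. -/
def lend (U : Set ℝ) (t : ℝ) : ℝ := sSup {s | s ≤ t ∧ s ∉ U}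

/-- Right endpoint of the connected component of `U` containing `t`. -/
def rend (U : Set ℝ) (t : ℝ) : ℝ := sInf {s | t ≤ s ∧ s ∉ U}

/-- Midpoint `m_i^{(j)}` of the connected component of `U` containing `t`. -/
def midpt (U : Set ℝ) (t : ℝ) : ℝ := (lend U t + rend U t) / 2

/-- The integrand `δ'_(i)(s) / (δ_(i-1)(s) − δ_(i)(s))` (that is, `K'_i`). -/
def kInt (δ : Fin d → Measure ℝ) (i : ℕ) (s : ℝ) : ℝ :=
  deriv (dcdf δ i) s / (dcdf δ (i - 1) s - dcdf δ i s)

/-- `K_i(t)`, integrating `K'_i` from the midpoint of the connected component of `Ψ^δ_i`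
containing `t` (note `K_{d+1} = 0` holds automatically, `δ_(d+1)` being constant). -/
def Kfun (δ : Fin d → Measure ℝ) (i : ℕ) (t : ℝ) : ℝ :=
  ∫ s in (midpt (Psi δ i) t)..t, kInt δ i s

/-- The function `a_i(t) = K'_i(t) e^{K_{i+1}(t) − K_i(t)} 1_{Ψ^δ_i ∩ Ψ^δ_{i+1}}(t)`. -/
def aFun (δ : Fin d → Measure ℝ) (i : ℕ) : ℝ → ℝ :=
  (Psi δ i ∩ Psi δ (i + 1)).indicator fun t =>
    kInt δ i t * Real.exp (Kfun δ (i + 1) t - Kfun δ i t)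

/-- The set `L_δ` of `u ∈ [0,1]^d` such that `(u_(i-1), u_(i)) ⊆ Ψ^δ_i` for all `2 ≤ i ≤ d`. -/
def Lset [NeZero d] (δ : Fin d → Measure ℝ) : Set (Fin d → ℝ) :=
  {u | (∀ j, u j ∈ Icc (0 : ℝ) 1) ∧
    ∀ i : Fin d, i ≠ 0 → Ioo (orderStat u (i - 1)) (orderStat u i) ⊆ Psi δ (i.val + 1)}

/-- The density `c_δ(u) = (1/d!) 1_{L_δ}(u) ∏_{i=1}^d a_i(u_(i))` of the maximum entropy copula
with multidiagonal `δ`. -/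
def cDelta [NeZero d] (δ : Fin d → Measure ℝ) : (Fin d → ℝ) → ℝ :=
  (Lset δ).indicator fun u =>
    (d.factorial : ℝ)⁻¹ * ∏ i : Fin d, aFun δ (i.val + 1) (orderStat u i)

/-- The maximum entropy copula `C_δ` with multidiagonal `δ` : the measure with density `c_δ`. -/
def CDelta [NeZero d] (δ : Fin d → Measure ℝ) : Measure (Fin d → ℝ) :=
  (volume : Measure (Fin d → ℝ)).withDensity fun u => ENNReal.ofReal (cDelta δ u)

/-- The density of a one-dimensional measure `ν` with respect to Lebesgue measure. -/
def densOf (ν : Measure ℝ) (t : ℝ) : ℝ := (ν.rnDeriv volume t).toReal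

/-- The function `ℓ_i(t) = f_i(t) / (F_{i-1}(t) − F_i(t))`. -/
def ellF [NeZero d] (F : Fin d → Measure ℝ) (i : Fin d) (t : ℝ) : ℝ :=
  densOf (F i) t / (cdf1 (F (i - 1)) t - cdf1 (F i) t)

/-- The set `L^F` of ordered vectors `x ∈ ℝ^d` such that `F_{i-1}(t) > F_i(t)` for all
`t ∈ (x_{i-1}, x_i)` and all `2 ≤ i ≤ d`. -/
def LsetF [NeZero d] (F : Fin d → Measure ℝ) : Set (Fin d → ℝ) :=
  {x | Monotone x ∧ ∀ i : Fin d, i ≠ 0 →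
    ∀ t ∈ Ioo (x (i - 1)) (x i), cdf1 (F i) t < cdf1 (F (i - 1)) t}

/-- The density `f_F` of the maximum entropy distribution of order statistics with marginal
cdfs `F` :
`f_F(x) = f_1(x_1) ∏_{i=2}^d ℓ_i(x_i) exp(−∫_{x_{i-1}}^{x_i} ℓ_i(s) ds) 1_{L^F}(x)`. -/
def fF [NeZero d] (F : Fin d → Measure ℝ) : (Fin d → ℝ) → ℝ :=
  (LsetF F).indicator fun x =>
    densOf (F 0) (x 0) *
      ∏ i ∈ Finset.univ.erase (0 : Fin d),
        ellF F i (x i) * Real.exp (-∫ s in (x (i - 1))..(x i), ellF F i s)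

/-!
Sklar's theorem identifies the copulas in `C^OS(F)` with the laws of order statistics with
marginals `F`, and `S_F` with the symmetrization of these laws. A symmetric law is the
symmetrization of the law of its order statistics, so the symmetrized laws are exactly the symmetric
laws with multidiagonal `F`. All one-dimensional marginals of such a law have cdf `G`, because the
cdfs of the coordinates and those of the order statistics have the same sum. Passing to the copula
therefore applies the same nondecreasing map `G` to every coordinate. This commutes with sorting, so
it turns the multidiagonal `F` into `δ^F`, and `G⁻¹` undoes it almost surely.
-/

section UnivariateQuantile

lemma monotone_cdf1 (ν : Measure ℝ) [IsFiniteMeasure ν] : Monotone (cdf1 ν) :=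
  fun _ _ h => measureReal_mono (Iic_subset_Iic.2 h)

@[fun_prop]
lemma measurable_cdf1 (ν : Measure ℝ) [IsFiniteMeasure ν] : Measurable (cdf1 ν) :=
  (monotone_cdf1 ν).measurable

lemma ext_of_cdf1 {ν ρ : Measure ℝ} [IsFiniteMeasure ν] [IsFiniteMeasure ρ]
    (h : cdf1 ν = cdf1 ρ) : ν = ρ :=
  Measure.ext_of_Iic ν ρ fun t =>
    (ENNReal.toReal_eq_toReal_iff' (measure_ne_top _ _) (measure_ne_top _ _)).1 (congrFun h t)

instance : IsProbabilityMeasure uniform01 := ⟨by simp [uniform01]⟩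

instance : NullSingletonClass uniform01 :=
  inferInstanceAs (NullSingletonClass (volume.restrict (Icc 0 1)))

lemma uniform01_Iic {t : ℝ} (ht : t ≤ 1) : uniform01 (Iic t) = ENNReal.ofReal t := by
  have : Iic t ∩ Icc 0 1 = Icc 0 t := by ext; grind
  rw [uniform01, Measure.restrict_apply measurableSet_Iic, this, Real.volume_Icc, sub_zero]

lemma ae_uniform01_mem_Ioo : ∀ᵐ u ∂uniform01, u ∈ Ioo (0 : ℝ) 1 := by
  rw [uniform01, ← Measure.restrict_congr_set Ioo_ae_eq_Icc]
  exact ae_restrict_mem measurableSet_Ioo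

-- `sInf` has the junk value `0` outside the interval of levels at which the quantile exists.
@[fun_prop]
lemma measurable_qReal (ν : Measure ℝ) : Measurable (qReal ν) := by
  let S : ℝ → Set ℝ := fun t => {s | t ≤ cdf1 ν s}
  have hS : Antitone S := fun _ _ htu _ hs => htu.trans hs
  let T : Set ℝ := {t | (S t).Nonempty ∧ BddBelow (S t)}
  have hT : T.OrdConnected :=
    ⟨fun t ht u hu v hv => ⟨hu.1.mono (hS hv.2), ht.2.mono (hS hv.1)⟩⟩
  refine measurable_of_restrict_of_restrict_compl hT.measurableSet ?_ ?_
  · refine Monotone.measurable fun t u htu => ?_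
    exact csInf_le_csInf t.2.2 u.2.1 (hS htu)
  · refine measurable_const' (fun t u => ?_)
    have h0 : ∀ v : ↥Tᶜ, qReal ν v = 0 := fun v => by
      rcases (S v).eq_empty_or_nonempty with h | h
      · exact (congrArg sInf h).trans Real.sInf_empty
      · exact Real.sInf_of_not_bddBelow fun hb => v.2 ⟨h, hb⟩
    simp only [domRestrict_apply, h0]

variable (ν : Measure ℝ) [IsProbabilityMeasure ν] {u : ℝ}

lemma cdf1_eq_cdf : cdf1 ν = ProbabilityTheory.cdf ν :=
  funext fun t => (ProbabilityTheory.cdf_eq_real ν t).symm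

lemma qReal_le_iff (hu : u ∈ Ioo (0 : ℝ) 1) {x : ℝ} : qReal ν u ≤ x ↔ u ≤ cdf1 ν x := by
  have hbot := ProbabilityTheory.tendsto_cdf_atBot ν
  have htop := ProbabilityTheory.tendsto_cdf_atTop ν
  have hright : ContinuousWithinAt (cdf1 ν) (Ioi x) x :=
    cdf1_eq_cdf ν ▸ ((ProbabilityTheory.cdf ν).right_continuous x).mono Ioi_subset_Ici_self
  rw [← cdf1_eq_cdf] at hbot htop
  obtain ⟨a, ha⟩ := (hbot.eventually_lt_const hu.1).exists
  obtain ⟨b, hb⟩ := (htop.eventually_const_lt hu.2).exists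
  have hbdd : BddBelow {s | u ≤ cdf1 ν s} :=
    ⟨a, fun s hs => ((monotone_cdf1 ν).reflect_lt (ha.trans_le hs)).le⟩
  refine ⟨fun hx => ge_of_tendsto hright ?_, fun hx => csInf_le hbdd hx⟩
  filter_upwards [self_mem_nhdsWithin] with y hy
  obtain ⟨s, hs, hsy⟩ := exists_lt_of_csInf_lt ⟨b, hb.le⟩ (hx.trans_lt hy)
  exact hs.trans (monotone_cdf1 ν hsy.le)

lemma monotoneOn_qReal : MonotoneOn (qReal ν) (Ioo 0 1) := fun _ hu _ hv huv =>
  (qReal_le_iff ν hu).2 (huv.trans ((qReal_le_iff ν hv).1 le_rfl))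

lemma measurePreserving_qReal : MeasurePreserving (qReal ν) uniform01 ν := by
  refine ⟨measurable_qReal ν, ?_⟩
  have := Measure.isProbabilityMeasure_map (μ := uniform01) (measurable_qReal ν).aemeasurable
  refine Measure.ext_of_Iic _ _ fun x => ?_
  have hae : qReal ν ⁻¹' Iic x =ᵐ[uniform01] Iic (cdf1 ν x) := by
    filter_upwards [ae_uniform01_mem_Ioo] with u hu
    exact propext (qReal_le_iff ν hu)
  calc uniform01.map (qReal ν) (Iic x) = uniform01 (Iic (cdf1 ν x)) := by
        rw [Measure.map_apply (measurable_qReal ν) measurableSet_Iic, measure_congr hae]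
    _ = ENNReal.ofReal (cdf1 ν x) := uniform01_Iic measureReal_le_one
    _ = ν (Iic x) := ENNReal.ofReal_toReal (measure_ne_top ν _)

variable [NullSingletonClass ν]

lemma cdf1_qReal (hu : u ∈ Ioo (0 : ℝ) 1) : cdf1 ν (qReal ν u) = u := by
  refine le_antisymm (ENNReal.toReal_le_of_le_ofReal hu.1.le ?_) ((qReal_le_iff ν hu).1 le_rfl)
  calc ν (Iic (qReal ν u)) = ν (Iio (qReal ν u)) := measure_congr Iio_ae_eq_Iic.symm
    _ = uniform01 (qReal ν ⁻¹' Iio (qReal ν u)) :=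
      ((measurePreserving_qReal ν).measure_preimage measurableSet_Iio.nullMeasurableSet).symm
    _ ≤ uniform01 (Iic u) := by
      refine measure_mono_ae ?_
      filter_upwards [ae_uniform01_mem_Ioo] with v hv hlt
      exact ((monotoneOn_qReal ν).reflect_lt hv hu hlt).le
    _ = ENNReal.ofReal u := uniform01_Iic hu.2.le

lemma measurePreserving_cdf1 : MeasurePreserving (cdf1 ν) ν uniform01 := by
  have hcomp : cdf1 ν ∘ qReal ν =ᵐ[uniform01] id := by
    filter_upwards [ae_uniform01_mem_Ioo] with u hu using cdf1_qReal ν hu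
  refine ⟨measurable_cdf1 ν, ?_⟩
  calc ν.map (cdf1 ν) = (uniform01.map (qReal ν)).map (cdf1 ν) := by
        rw [(measurePreserving_qReal ν).map_eq]
    _ = uniform01.map (cdf1 ν ∘ qReal ν) :=
        Measure.map_map (measurable_cdf1 ν) (measurable_qReal ν)
    _ = uniform01 := by rw [Measure.map_congr hcomp, Measure.map_id]

lemma qReal_comp_cdf1_ae_eq_id : qReal ν ∘ cdf1 ν =ᵐ[ν] id := by
  have hmeas : MeasurableSet {x | qReal ν (cdf1 ν x) = x} :=
    measurableSet_eq_fun ((measurable_qReal ν).comp (measurable_cdf1 ν)) measurable_id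
  have hq : ∀ᵐ u ∂uniform01, qReal ν (cdf1 ν (qReal ν u)) = qReal ν u := by
    filter_upwards [ae_uniform01_mem_Ioo] with u hu
    rw [cdf1_qReal ν hu]
  rwa [← ae_map_iff (measurable_qReal ν).aemeasurable hmeas,
    (measurePreserving_qReal ν).map_eq] at hq

end UnivariateQuantile

section OrderStatistics

lemma orderStat_comp_perm (x : Fin d → ℝ) (π : Equiv.Perm (Fin d)) :
    orderStat (fun i => x (π i)) = orderStat x :=
  Tuple.comp_perm_comp_sort_eq_comp_sort

lemma comp_perm_eq_orderStat {x : Fin d → ℝ} {π : Equiv.Perm (Fin d)}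
    (h : Monotone fun i => x (π i)) : (fun i => x (π i)) = orderStat x :=
  Tuple.comp_sort_eq_comp_iff_monotone.2 h

lemma orderStat_eq_self {x : Fin d → ℝ} (h : Monotone x) : orderStat x = x :=
  (comp_perm_eq_orderStat (π := 1) h).symm

lemma orderStat_comp_of_monotoneOn {g : ℝ → ℝ} {s : Set ℝ} (hg : MonotoneOn g s)
    {x : Fin d → ℝ} (hx : ∀ i, x i ∈ s) :
    orderStat (fun i => g (x i)) = fun i => g (orderStat x i) :=
  (comp_perm_eq_orderStat (x := fun i => g (x i)) (π := Tuple.sort x) fun _ _ hij =>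
    hg (hx _) (hx _) (Tuple.monotone_sort x hij)).symm

lemma measurable_orderStat : Measurable (orderStat : (Fin d → ℝ) → Fin d → ℝ) := by
  intro A hA
  have hpre : orderStat ⁻¹' A = ⋃ π : Equiv.Perm (Fin d),
      (fun (x : Fin d → ℝ) i => x (π i)) ⁻¹' ({x | Monotone x} ∩ A) := by
    ext x
    rw [mem_preimage, mem_iUnion]
    refine ⟨fun h => ⟨Tuple.sort x, Tuple.monotone_sort x, h⟩, ?_⟩
    rintro ⟨π, hπ, h⟩
    rwa [← comp_perm_eq_orderStat hπ]
  rw [hpre]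
  exact MeasurableSet.iUnion fun π =>
    (by fun_prop : Measurable fun (x : Fin d → ℝ) i => x (π i))
      (isClosed_monotone.measurableSet.inter hA)

end OrderStatistics

section Marginals

variable (μ : Measure (Fin d → ℝ))

instance [IsProbabilityMeasure μ] (i : Fin d) : IsProbabilityMeasure (marg μ i) :=
  Measure.isProbabilityMeasure_map (measurable_pi_apply i).aemeasurable

instance [IsProbabilityMeasure μ] (i : Fin d) : IsProbabilityMeasure (multidiag μ i) :=
  Measure.isProbabilityMeasure_map
    ((measurable_pi_apply i).comp measurable_orderStat).aemeasurable

lemma ae_forall_of_ae_marg {p : Fin d → ℝ → Prop} (h : ∀ i, ∀ᵐ t ∂(marg μ i), p i t) :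
    ∀ᵐ x ∂μ, ∀ i, p i (x i) :=
  ae_all_iff.2 fun i => ae_of_ae_map (measurable_pi_apply i).aemeasurable (h i)

lemma marg_map {g : Fin d → ℝ → ℝ} (hg : ∀ i, Measurable (g i)) (i : Fin d) :
    marg (μ.map fun x i => g i (x i)) i = (marg μ i).map (g i) := by
  rw [marg, marg, Measure.map_map (by fun_prop) (by fun_prop),
    Measure.map_map (by fun_prop) (by fun_prop)]
  rfl

lemma multidiag_eq_marg_map_orderStat : multidiag μ = marg (μ.map orderStat) := by
  ext1 i
  rw [marg, Measure.map_map (measurable_pi_apply i) measurable_orderStat]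
  rfl

variable {μ}

lemma multidiag_eq_marg (hμ : ∀ᵐ x ∂μ, Monotone x) : multidiag μ = marg μ :=
  funext fun i => Measure.map_congr <| hμ.mono fun _ hx => congrFun (orderStat_eq_self hx) i

lemma multidiag_map {g : ℝ → ℝ} {s : Set ℝ} (hg : MonotoneOn g s) (hgm : Measurable g)
    (hμ : ∀ᵐ x ∂μ, ∀ i, x i ∈ s) (i : Fin d) :
    multidiag (μ.map fun x i => g (x i)) i = (multidiag μ i).map g := by
  have hi : Measurable fun x : Fin d → ℝ => orderStat x i :=
    (measurable_pi_apply i).comp measurable_orderStat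
  rw [multidiag, multidiag, Measure.map_map hi (by fun_prop), Measure.map_map hgm hi]
  exact Measure.map_congr <| hμ.mono fun x hx => congrFun (orderStat_comp_of_monotoneOn hg hx) i

end Marginals

section Symmetrization

lemma card_nsmul_sum_perm_apply {ι M : Type*} [Fintype ι] [DecidableEq ι] [AddCommMonoid M]
    (f : ι → M) (i : ι) :
    Fintype.card ι • ∑ π : Equiv.Perm ι, f (π i) = (Fintype.card ι).factorial • ∑ j, f j := by
  have hind (j : ι) : ∑ π : Equiv.Perm ι, f (π j) = ∑ π : Equiv.Perm ι, f (π i) :=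
    Fintype.sum_equiv (Equiv.mulRight (Equiv.swap i j)) _ _ fun π => by
      simp [Equiv.Perm.mul_apply]
  calc Fintype.card ι • ∑ π : Equiv.Perm ι, f (π i)
      = ∑ j, ∑ π : Equiv.Perm ι, f (π j) := by simp [hind]
    _ = ∑ π : Equiv.Perm ι, ∑ j, f (π j) := Finset.sum_comm
    _ = ∑ _π : Equiv.Perm ι, ∑ j, f j := by simp only [Equiv.sum_comp]
    _ = (Fintype.card ι).factorial • ∑ j, f j := by simp [Fintype.card_perm]

lemma inv_natCast_smul_nsmul {α : Type*} [MeasurableSpace α] {n : ℕ} (hn : n ≠ 0)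
    (μ : Measure α) : (n : ℝ≥0∞)⁻¹ • n • μ = μ := by
  rw [← Nat.cast_smul_eq_nsmul ℝ≥0∞, smul_smul,
    ENNReal.inv_mul_cancel (Nat.cast_ne_zero.2 hn) (ENNReal.natCast_ne_top n), one_smul]

lemma inv_factorial_smul_sum_perm_const {α : Type*} [MeasurableSpace α] (μ : Measure α) :
    (d.factorial : ℝ≥0∞)⁻¹ • ∑ _π : Equiv.Perm (Fin d), μ = μ := by
  rw [Finset.sum_const, Finset.card_univ, Fintype.card_perm, Fintype.card_fin,
    inv_natCast_smul_nsmul d.factorial_ne_zero]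

variable (μ : Measure (Fin d → ℝ))

lemma map_symmetrize {α : Type*} [MeasurableSpace α] {f : (Fin d → ℝ) → α} (hf : Measurable f) :
    (symmetrize μ).map f =
      (d.factorial : ℝ≥0∞)⁻¹ •
        ∑ π : Equiv.Perm (Fin d), μ.map fun x => f fun i => x (π i) := by
  rw [symmetrize, Measure.map_smul, Measure.map_finset_sum' hf.aemeasurable]
  congr! 2 with π
  exact Measure.map_map hf (by fun_prop)

lemma lintegral_symmetrize {f : (Fin d → ℝ) → ℝ≥0∞} (hf : Measurable f) :
    ∫⁻ x, f x ∂(symmetrize μ) =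
      (d.factorial : ℝ≥0∞)⁻¹ * ∫⁻ x, ∑ π : Equiv.Perm (Fin d), f (fun i => x (π i)) ∂μ := by
  rw [symmetrize, lintegral_smul_measure, lintegral_finsetSum_measure,
    lintegral_finsetSum _ fun _ _ => by fun_prop, smul_eq_mul]
  congr! 2 with π
  exact lintegral_map hf (by fun_prop)

lemma isSymmetric_symmetrize : IsSymmetric (symmetrize μ) := by
  intro σ
  rw [map_symmetrize μ (by fun_prop), symmetrize]
  congr 1
  exact Fintype.sum_equiv (Equiv.mulRight σ) _ _ fun π => rfl

lemma map_orderStat_symmetrize : (symmetrize μ).map orderStat = μ.map orderStat := by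
  simp only [map_symmetrize μ measurable_orderStat, orderStat_comp_perm]
  exact inv_factorial_smul_sum_perm_const _

lemma multidiag_symmetrize : multidiag (symmetrize μ) = multidiag μ := by
  simp only [multidiag_eq_marg_map_orderStat, map_orderStat_symmetrize]

instance [IsProbabilityMeasure μ] : IsProbabilityMeasure (symmetrize μ) := by
  have : IsProbabilityMeasure ((symmetrize μ).map orderStat) :=
    map_orderStat_symmetrize μ ▸
      Measure.isProbabilityMeasure_map measurable_orderStat.aemeasurable
  exact Measure.isProbabilityMeasure_of_map orderStat

-- Given `x`, the permutation `sort x * π` is uniform when `π` is.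
lemma symmetrize_map_orderStat : symmetrize (μ.map orderStat) = symmetrize μ := by
  refine Measure.ext_of_lintegral _ fun f hf => ?_
  rw [lintegral_symmetrize _ hf, lintegral_symmetrize _ hf,
    lintegral_map (by fun_prop) measurable_orderStat]
  congr! 3 with x
  exact Fintype.sum_equiv (Equiv.mulLeft (Tuple.sort x)) _ _ fun π => rfl

variable {μ}

lemma IsSymmetric.symmetrize_eq_self (hμ : IsSymmetric μ) : symmetrize μ = μ := by
  rw [symmetrize, Finset.sum_congr rfl fun π _ => hμ π, inv_factorial_smul_sum_perm_const]

lemma IsSymmetric.map (hμ : IsSymmetric μ) {g : ℝ → ℝ} (hg : Measurable g) :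
    IsSymmetric (μ.map fun x i => g (x i)) := by
  intro π
  conv_rhs => rw [← hμ π]
  rw [Measure.map_map (by fun_prop) (by fun_prop), Measure.map_map (by fun_prop) (by fun_prop)]
  rfl

lemma image_symmetrize_isCdfOS (F : Fin d → Measure ℝ) :
    symmetrize '' {μ | IsCdfOS F μ} =
      {ν | IsProbabilityMeasure ν ∧ IsSymmetric ν ∧ multidiag ν = F} := by
  ext ν
  constructor
  · rintro ⟨μ, ⟨_, hmono, hmarg⟩, rfl⟩
    have hae : ∀ᵐ x ∂μ, Monotone x :=
      (mem_ae_iff_prob_eq_one isClosed_monotone.measurableSet).2 hmono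
    refine ⟨inferInstance, isSymmetric_symmetrize μ, ?_⟩
    rw [multidiag_symmetrize, multidiag_eq_marg hae, funext hmarg]
  · rintro ⟨_, hsym, rfl⟩
    have : IsProbabilityMeasure (ν.map orderStat) :=
      Measure.isProbabilityMeasure_map measurable_orderStat.aemeasurable
    refine ⟨ν.map orderStat, ⟨this, ?_, fun i => ?_⟩, ?_⟩
    · rw [← mem_ae_iff_prob_eq_one isClosed_monotone.measurableSet]
      exact (ae_map_iff measurable_orderStat.aemeasurable isClosed_monotone.measurableSet).2
        (ae_of_all _ Tuple.monotone_sort)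
    · rw [multidiag_eq_marg_map_orderStat]
    · rw [symmetrize_map_orderStat, hsym.symmetrize_eq_self]

end Symmetrization

section Sklar

lemma nullSingletonClass_of_absolutelyContinuous {α : Type*} [MeasurableSpace α] {ν ρ : Measure α}
    [NullSingletonClass ρ] (h : ν ≪ ρ) : NullSingletonClass ν :=
  ⟨fun x => h (measure_singleton x)⟩

lemma isCopula_copulaOf (μ : Measure (Fin d → ℝ)) [IsProbabilityMeasure μ]
    [∀ i, NullSingletonClass (marg μ i)] : IsCopula (copulaOf μ) := by
  refine ⟨Measure.isProbabilityMeasure_map (Measurable.aemeasurable (by fun_prop)), fun i => ?_⟩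
  rw [copulaOf, marg_map μ fun i => measurable_cdf1 (marg μ i), (measurePreserving_cdf1 _).map_eq]

lemma joinCopula_copulaOf (μ : Measure (Fin d → ℝ)) [IsProbabilityMeasure μ]
    [∀ i, NullSingletonClass (marg μ i)] : joinCopula (marg μ) (copulaOf μ) = μ := by
  have hid : (fun x i => qReal (marg μ i) (cdf1 (marg μ i) (x i))) =ᵐ[μ] id :=
    (ae_forall_of_ae_marg μ fun i => qReal_comp_cdf1_ae_eq_id (marg μ i)).mono
      fun _ hx => funext hx
  calc joinCopula (marg μ) (copulaOf μ)
      = μ.map fun x i => qReal (marg μ i) (cdf1 (marg μ i) (x i)) :=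
        Measure.map_map (by fun_prop) (by fun_prop)
    _ = μ := by rw [Measure.map_congr hid, Measure.map_id]

variable (F : Fin d → Measure ℝ) {C : Measure (Fin d → ℝ)}

lemma IsCopula.ae_mem_Ioo (hC : IsCopula C) : ∀ᵐ u ∂C, ∀ i, u i ∈ Ioo (0 : ℝ) 1 :=
  ae_forall_of_ae_marg C fun i => hC.2 i ▸ ae_uniform01_mem_Ioo

instance [IsProbabilityMeasure C] : IsProbabilityMeasure (joinCopula F C) :=
  Measure.isProbabilityMeasure_map (Measurable.aemeasurable (by fun_prop))

variable [∀ i, IsProbabilityMeasure (F i)]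

lemma marg_joinCopula (hC : IsCopula C) : marg (joinCopula F C) = F := by
  ext1 i
  rw [joinCopula, marg_map C fun i => measurable_qReal (F i), hC.2,
    (measurePreserving_qReal (F i)).map_eq]

lemma copulaOf_joinCopula [∀ i, NullSingletonClass (F i)] (hC : IsCopula C) :
    copulaOf (joinCopula F C) = C := by
  have hid : (fun u i => cdf1 (F i) (qReal (F i) (u i))) =ᵐ[C] id :=
    hC.ae_mem_Ioo.mono fun u hu => funext fun i => cdf1_qReal (F i) (hu i)
  calc copulaOf (joinCopula F C) = C.map fun u i => cdf1 (F i) (qReal (F i) (u i)) := by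
        rw [copulaOf, marg_joinCopula F hC]
        exact Measure.map_map (by fun_prop) (by fun_prop)
    _ = C := by rw [Measure.map_congr hid, Measure.map_id]

lemma image_SF_copulaOS [∀ i, NullSingletonClass (F i)] :
    SF F '' copulaOS F = copulaOf '' (symmetrize '' {μ | IsCdfOS F μ}) := by
  have hcop : copulaOS F = copulaOf '' {μ | IsCdfOS F μ} := rfl
  rw [hcop, image_image, image_image]
  refine image_congr fun μ ⟨_, _, hmarg⟩ => ?_
  obtain rfl : marg μ = F := funext hmarg
  rw [SF, joinCopula_copulaOf]

end Sklar

section Mixture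

/-- The law `(1/d) ∑ F_i` of `X_Π` for `X_i ∼ F_i` and an independent uniform index `Π`; its cdf
is the function `G` of the paper. -/
def mixture (F : Fin d → Measure ℝ) : Measure ℝ := (d : ℝ≥0∞)⁻¹ • ∑ i, F i

variable (F : Fin d → Measure ℝ)

instance [NeZero d] [∀ i, IsProbabilityMeasure (F i)] : IsProbabilityMeasure (mixture F) :=
  ⟨by simp [mixture, ENNReal.inv_mul_cancel (NeZero.ne (d : ℝ≥0∞)) (ENNReal.natCast_ne_top d)]⟩

instance [∀ i, NullSingletonClass (F i)] : NullSingletonClass (mixture F) :=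
  ⟨fun t => by simp [mixture]⟩

lemma cdf1_mixture [∀ i, IsFiniteMeasure (F i)] : cdf1 (mixture F) = Gbar F := by
  ext t
  simp [cdf1, mixture, Gbar, ENNReal.toReal_sum, div_eq_inv_mul]

lemma absolutelyContinuous_mixture (i : Fin d) : F i ≪ mixture F := by
  intro A hA
  have hsum : ∑ j, F j A = 0 := by simpa [mixture] using hA
  exact Finset.sum_eq_zero_iff.1 hsum i (Finset.mem_univ i)

lemma marg_symmetrize (μ : Measure (Fin d → ℝ)) (i : Fin d) :
    marg (symmetrize μ) i = mixture (marg μ) := by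
  have hd : d ≠ 0 := i.neZero.ne
  have hcard : d • ∑ π : Equiv.Perm (Fin d), marg μ (π i) = d.factorial • ∑ j, marg μ j := by
    simpa using card_nsmul_sum_perm_apply (marg μ) i
  calc marg (symmetrize μ) i
      = (d.factorial : ℝ≥0∞)⁻¹ • ∑ π : Equiv.Perm (Fin d), marg μ (π i) :=
        map_symmetrize μ (measurable_pi_apply i)
    _ = (d : ℝ≥0∞)⁻¹ • (d.factorial : ℝ≥0∞)⁻¹ • d • ∑ π : Equiv.Perm (Fin d), marg μ (π i) := by
        rw [smul_comm (d.factorial : ℝ≥0∞)⁻¹ d, inv_natCast_smul_nsmul hd]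
    _ = mixture (marg μ) := by
        rw [hcard, inv_natCast_smul_nsmul d.factorial_ne_zero, mixture]

lemma IsSymmetric.marg_eq_mixture_multidiag {μ : Measure (Fin d → ℝ)} (hμ : IsSymmetric μ)
    (i : Fin d) : marg μ i = mixture (multidiag μ) := by
  rw [multidiag_eq_marg_map_orderStat, ← marg_symmetrize _ i, symmetrize_map_orderStat,
    hμ.symmetrize_eq_self]

lemma monotone_Gbar [∀ i, IsFiniteMeasure (F i)] : Monotone (Gbar F) := fun _ _ hst =>
  div_le_div_of_nonneg_right (Finset.sum_le_sum fun i _ => monotone_cdf1 (F i) hst) d.cast_nonneg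

variable [∀ i, IsProbabilityMeasure (F i)]

instance (i : Fin d) : IsProbabilityMeasure (mdiagF F i) :=
  Measure.isProbabilityMeasure_map (monotone_Gbar F).measurable.aemeasurable

variable [NeZero d] [∀ i, NullSingletonClass (F i)]

lemma map_Gbar_mixture : (mixture F).map (Gbar F) = uniform01 :=
  cdf1_mixture F ▸ (measurePreserving_cdf1 (mixture F)).map_eq

lemma map_qReal_mdiagF (i : Fin d) : (mdiagF F i).map (qReal (mixture F)) = F i := by
  have hid : qReal (mixture F) ∘ Gbar F =ᵐ[F i] id :=
    (absolutelyContinuous_mixture F i).ae_le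
      (cdf1_mixture F ▸ qReal_comp_cdf1_ae_eq_id (mixture F))
  rw [mdiagF, Measure.map_map (measurable_qReal _) (monotone_Gbar F).measurable,
    Measure.map_congr hid, Measure.map_id]

instance (i : Fin d) : NullSingletonClass (mdiagF F i) :=
  nullSingletonClass_of_absolutelyContinuous <| map_Gbar_mixture F ▸
    (absolutelyContinuous_mixture F i).map (monotone_Gbar F).measurable

end Mixture

section Multidiagonal

lemma preimage_Iio_ae_eq_le_qInvE {g : ℝ → ℝ} (hg : Monotone g) (t : ℝ) (ν : Measure ℝ)
    [NullSingletonClass ν] : g ⁻¹' Iio t =ᵐ[ν] {s : ℝ | (s : EReal) ≤ qInvE g t} := by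
  have hne : ∀ᵐ s ∂ν, s ≠ (qInvE g t).toReal := compl_mem_ae_iff.2 (measure_singleton _)
  filter_upwards [hne] with s hs
  refine propext ⟨fun hst => le_sInf ?_, fun hle => ?_⟩
  · rintro _ ⟨r, hr, rfl⟩
    exact EReal.coe_le_coe_iff.2 (hg.reflect_lt (hst.trans_le hr)).le
  · change g s < t
    contrapose! hs
    have heq : (s : EReal) = qInvE g t := le_antisymm hle (sInf_le ⟨s, hs, rfl⟩)
    rw [← heq, EReal.toReal_coe]

variable [NeZero d] (F : Fin d → Measure ℝ) [∀ i, IsProbabilityMeasure (F i)]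
  [∀ i, NullSingletonClass (F i)]

lemma cdf1_mdiagF (i : Fin d) (t : ℝ) :
    cdf1 (mdiagF F i) t = cdfE (F i) (qInvE (Gbar F) t) := by
  have hIio : mdiagF F i (Iic t) = F i (Gbar F ⁻¹' Iio t) := by
    rw [← measure_congr Iio_ae_eq_Iic, mdiagF,
      Measure.map_apply (monotone_Gbar F).measurable measurableSet_Iio]
  rw [cdf1, cdfE, hIio,
    measure_congr (preimage_Iio_ae_eq_le_qInvE (monotone_Gbar F) t (F i))]

lemma multidiag_eq_mdiagF_iff {C : Measure (Fin d → ℝ)} [IsProbabilityMeasure C] :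
    multidiag C = mdiagF F ↔
      ∀ i t, cdf1 (multidiag C i) t = cdfE (F i) (qInvE (Gbar F) t) := by
  simp only [← cdf1_mdiagF]
  exact ⟨fun h i t => h ▸ rfl, fun h => funext fun i => ext_of_cdf1 (funext (h i))⟩

lemma image_copulaOf_isSymmetric :
    copulaOf '' {ν | IsProbabilityMeasure ν ∧ IsSymmetric ν ∧ multidiag ν = F} =
      {C | IsCopula C ∧ IsSymmetric C ∧ multidiag C = mdiagF F} := by
  ext C
  constructor
  · rintro ⟨ν, ⟨_, hsym, rfl⟩, rfl⟩
    have hG : copulaOf ν = ν.map fun x i => Gbar (multidiag ν) (x i) := by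
      simp only [copulaOf, hsym.marg_eq_mixture_multidiag, cdf1_mixture]
    have (i : Fin d) : NullSingletonClass (marg ν i) :=
      hsym.marg_eq_mixture_multidiag i ▸ inferInstance
    refine ⟨isCopula_copulaOf ν, hG ▸ hsym.map (monotone_Gbar _).measurable, funext fun i => ?_⟩
    rw [hG, multidiag_map ((monotone_Gbar _).monotoneOn univ) (monotone_Gbar _).measurable
      (by simp), mdiagF]
  · rintro ⟨hcop, hsym, hdiag⟩
    have hq := measurable_qReal (mixture F)
    have := hcop.1
    refine ⟨joinCopula (fun _ => mixture F) C, ⟨inferInstance, hsym.map hq, funext fun i => ?_⟩,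
      copulaOf_joinCopula _ hcop⟩
    rw [joinCopula, multidiag_map (monotoneOn_qReal _) hq hcop.ae_mem_Ioo, hdiag, map_qReal_mdiagF]

end Multidiagonal

theorem stmt_8_general [NeZero d] (F : Fin d → Measure ℝ) [∀ i, IsProbabilityMeasure (F i)]
    [∀ i, NullSingletonClass (F i)] :
    SF F '' copulaOS F =
      {C | IsCopula C ∧ IsSymmetric C ∧
        ∀ (i : Fin d) (t : ℝ), cdf1 (multidiag C i) t = cdfE (F i) (qInvE (Gbar F) t)} :=
  calc SF F '' copulaOS F = copulaOf '' (symmetrize '' {μ | IsCdfOS F μ}) := image_SF_copulaOS F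
    _ = copulaOf '' {ν | IsProbabilityMeasure ν ∧ IsSymmetric ν ∧ multidiag ν = F} := by
      rw [image_symmetrize_isCdfOS]
    _ = {C | IsCopula C ∧ IsSymmetric C ∧ multidiag C = mdiagF F} := image_copulaOf_isSymmetric F
    _ = _ := by
      ext C
      refine and_congr_right fun hcop => and_congr_right fun _ => ?_
      have := hcop.1
      exact multidiag_eq_mdiagF_iff F

/-- Proposition `prop:char_cfsym`.  Let `F = (F_1, …, F_d)` be a `d`-tuple
of continuous cdfs on `ℝ` with `F_{i-1} ≥ F_i` pointwise.  Then
`C^sym(F) = C_{δ^F} ∩ C^sym` : the image of `C^OS(F)` under `S_F` equals the set of symmetric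
copulas whose multidiagonal is `δ^F = (F_i ∘ G^{-1}, 1 ≤ i ≤ d)`, where
`G = (1/d) ∑_{i=1}^d F_i`. -/
theorem stmt_8 {d : ℕ} [NeZero d] (F : Fin d → Measure ℝ) (hF : IsMargOS F) :
    SF F '' copulaOS F =
      {C | IsCopula C ∧ IsSymmetric C ∧
        ∀ (i : Fin d) (t : ℝ), cdf1 (multidiag C i) t = cdfE (F i) (qInvE (Gbar F) t)} := by
  have := hF.prob
  have (i : Fin d) : NullSingletonClass (F i) := ⟨hF.cont i⟩
  exact stmt_8_general F

end MaxEntOS
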